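/- Let γ be a T-periodic solution of the Hamiltonian system ẋ = J∇Γ(x) and let S be a 2n×2n real orthogonal matrix with SJ = JS, Γ(Sx) = Γ(x) for all x, and γ(s + T/N) = S γ(s) for all s, for some N ∈ ℕ, N ≥ 1. Let Y : ℝ → M_{2n}(ℝ) satisfy Y′(s) = J·D²Γ(γ(s))·Y(s) with Y(0) = Y₀ invertible. Then Y(s + T/N) = S Y(s) Y₀⁻¹ Sᵀ Y(T/N) for all s, and consequently Y(kT/N) = Sᵏ Y₀ (Y₀⁻¹ Sᵀ Y(T/N))ᵏ for every k ∈ ℕ. -/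

import Mathlib

open Matrix

/-- The standard `2n × 2n` symplectic matrix `J = [[0, I],[−I, 0]]`, with the index set
`Fin n ⊕ Fin n` (first summand: configuration coordinates, second: momenta). -/
def stdJ (n : ℕ) : Matrix (Fin n ⊕ Fin n) (Fin n ⊕ Fin n) ℝ :=
  Matrix.fromBlocks 0 1 (-1) 0

/-- The gradient of `f : ℝ^ι → ℝ` at `x`, componentwise via the Fréchet derivative. -/
noncomputable def gradV {ι : Type} [Fintype ι] [DecidableEq ι]
    (f : (ι → ℝ) → ℝ) (x : ι → ℝ) : ι → ℝ :=
  fun i => fderiv ℝ f x (Pi.single i 1)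

/-- The Hessian matrix `D²f(x)` of `f : ℝ^ι → ℝ` at `x`. -/
noncomputable def hessM {ι : Type} [Fintype ι] [DecidableEq ι]
    (f : (ι → ℝ) → ℝ) (x : ι → ℝ) : Matrix ι ι ℝ :=
  Matrix.of fun i j => fderiv ℝ (fun y => fderiv ℝ f y (Pi.single j 1)) x (Pi.single i 1)

/-!
Put `τ = T / N` and `A(s) = J D²Γ(γ(s))`. Differentiating `Γ ∘ S = Γ` twice gives
`D²Γ(x) = Sᵀ D²Γ(S x) S`; since `S J Sᵀ = J` and `γ(s + τ) = S γ(s)`, it follows that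
`S A(s) = A(s + τ) S`. Hence `s ↦ Y(s + τ)` and `s ↦ S Y(s) Y(0)⁻¹ S⁻¹ Y(τ)` both solve the linear
equation `X' = A(s + τ) X`. They agree at `s = 0`, so they are equal, and iterating the resulting
identity `Y(s + τ) = S Y(s) B` with constant `B` gives the values at multiples of `τ`.
-/

theorem linearODE_solution_unique {E : Type*} [NormedAddCommGroup E] [NormedSpace ℝ E]
    {A : ℝ → E →L[ℝ] E} (hA : Continuous A) {f g : ℝ → E} {t₀ : ℝ}
    (hf : ∀ t, HasDerivAt f (A t (f t)) t) (hg : ∀ t, HasDerivAt g (A t (g t)) t)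
    (h₀ : f t₀ = g t₀) : f = g := by
  ext t
  -- `A` may be unbounded on `ℝ`, so the Lipschitz constant exists only on bounded intervals.
  obtain ⟨a, ha⟩ := exists_lt (min t t₀)
  obtain ⟨b, hb⟩ := exists_gt (max t t₀)
  rw [lt_min_iff] at ha
  rw [max_lt_iff] at hb
  obtain ⟨K, hK⟩ := (isCompact_Icc (a := a) (b := b)).bddAbove_image hA.nnnorm.continuousOn
  have hLip : ∀ u ∈ Set.Ioo a b, LipschitzOnWith K (A u) Set.univ := fun u hu =>
    ((A u).lipschitz.weaken
      (hK (Set.mem_image_of_mem _ (Set.Ioo_subset_Icc_self hu)))).lipschitzOnWith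
  exact ODE_solution_unique_of_mem_Ioo (v := fun u => A u) hLip ⟨ha.2, hb.2⟩
    (fun u _ => ⟨hf u, trivial⟩) (fun u _ => ⟨hg u, trivial⟩) h₀ ⟨ha.1, hb.1⟩

theorem linearODE_apply_add_of_semiconjBy {𝔸 : Type*} [NormedRing 𝔸] [NormedAlgebra ℝ 𝔸]
    {A Y : ℝ → 𝔸} {S Y₀ : 𝔸ˣ} {τ : ℝ} (hA : Continuous A)
    (hS : ∀ t, SemiconjBy (S : 𝔸) (A t) (A (t + τ)))
    (hY : ∀ t, HasDerivAt Y (A t * Y t) t) (hY₀ : Y 0 = Y₀) (t : ℝ) :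
    Y (t + τ) = S * Y t * ↑Y₀⁻¹ * ↑S⁻¹ * Y τ := by
  have hshift (t : ℝ) : HasDerivAt (fun u => Y (u + τ)) (A (t + τ) * Y (t + τ)) t :=
    (hY (t + τ)).comp_add_const t τ
  have hconj (t : ℝ) : HasDerivAt (fun u => S * Y u * (↑Y₀⁻¹ * ↑S⁻¹ * Y τ))
      (A (t + τ) * (S * Y t * (↑Y₀⁻¹ * ↑S⁻¹ * Y τ))) t := by
    refine (((hY t).const_mul (S : 𝔸)).mul_const _).congr_deriv ?_
    simp only [← mul_assoc, (hS t).eq]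
  have hA' : Continuous fun t => ContinuousLinearMap.mul ℝ 𝔸 (A (t + τ)) := by fun_prop
  have heq := linearODE_solution_unique hA' (t₀ := 0) hshift hconj
    (by simp [hY₀, ← mul_assoc])
  simpa only [← mul_assoc] using congrFun heq t

theorem apply_nsmul_of_apply_add {R M : Type*} [AddMonoid R] [Monoid M] {Y : R → M} {τ : R}
    {a b : M} (h : ∀ t, Y (t + τ) = a * Y t * b) (k : ℕ) :
    Y (k • τ) = a ^ k * Y 0 * b ^ k := by
  induction k with
  | zero => simp
  | succ k ih => rw [succ_nsmul, h, ih, pow_succ', pow_succ]; simp only [mul_assoc]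

theorem bilinearIteratedFDerivTwo_comp_clm {𝕜 E F G : Type*} [NontriviallyNormedField 𝕜]
    [NormedAddCommGroup E] [NormedSpace 𝕜 E] [NormedAddCommGroup F] [NormedSpace 𝕜 F]
    [NormedAddCommGroup G] [NormedSpace 𝕜 G] {f : F → G} (hf : ContDiff 𝕜 2 f) (L : E →L[𝕜] F)
    (x : E) :
    bilinearIteratedFDerivTwo 𝕜 (f ∘ L) x =
      (bilinearIteratedFDerivTwo 𝕜 f (L x)).compl₁₂ (L : E →ₗ[𝕜] F) (L : E →ₗ[𝕜] F) := by
  ext u v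
  have hL : ![L u, L v] = fun i => L (![u, v] i) := by ext i; fin_cases i <;> rfl
  simp only [LinearMap.compl₁₂_apply, ContinuousLinearMap.coe_coe,
    bilinearIteratedFDerivTwo_eq_iteratedFDeriv, L.iteratedFDeriv_comp_right hf x le_rfl, hL]
  rfl

section Hessian

variable {ι κ : Type} [Fintype ι] [DecidableEq ι] [Fintype κ] [DecidableEq κ]
  {f : (ι → ℝ) → ℝ}

theorem hessM_eq_toMatrix₂' (hf : ContDiff ℝ 2 f) (x : ι → ℝ) :
    hessM f x = LinearMap.toMatrix₂' ℝ (bilinearIteratedFDerivTwo ℝ f x) := by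
  have hd : DifferentiableAt ℝ (fderiv ℝ f) x :=
    (hf.fderiv_right (m := 1) le_rfl).differentiable one_ne_zero x
  ext i j
  simp [hessM, bilinearIteratedFDerivTwo, fderiv_clm_apply hd (differentiableAt_const _)]

theorem continuous_hessM (hf : ContDiff ℝ 2 f) : Continuous (hessM f) := by
  refine continuous_matrix fun i j => ?_
  simp only [hessM_eq_toMatrix₂' hf, LinearMap.toMatrix₂'_apply,
    bilinearIteratedFDerivTwo_eq_iteratedFDeriv]
  fun_prop

theorem hessM_comp_mulVec (hf : ContDiff ℝ 2 f) (S : Matrix ι κ ℝ) (x : κ → ℝ) :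
    hessM (fun y => f (S *ᵥ y)) x = Sᵀ * hessM f (S *ᵥ x) * S := by
  let L : (κ → ℝ) →L[ℝ] ι → ℝ := (toLin' S).toContinuousLinearMap
  have hfL : ContDiff ℝ 2 (f ∘ L) := hf.comp L.contDiff
  calc hessM (f ∘ L) x
      = LinearMap.toMatrix₂' ℝ ((bilinearIteratedFDerivTwo ℝ f (L x)).compl₁₂ (toLin' S)
          (toLin' S)) := by
        rw [hessM_eq_toMatrix₂' hfL, bilinearIteratedFDerivTwo_comp_clm hf]; rfl
    _ = Sᵀ * hessM f (S *ᵥ x) * S := by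
        rw [LinearMap.toMatrix₂'_compl₁₂, LinearMap.toMatrix'_toLin', hessM_eq_toMatrix₂' hf]; rfl

theorem semiconjBy_mul_hessM (hf : ContDiff ℝ 2 f) {J S : Matrix ι ι ℝ}
    (hfS : ∀ x, f (S *ᵥ x) = f x) (hSJ : S * J * Sᵀ = J) (x : ι → ℝ) :
    SemiconjBy S (J * hessM f x) (J * hessM f (S *ᵥ x)) := by
  have hH : hessM f x = Sᵀ * hessM f (S *ᵥ x) * S := by
    simpa only [hfS] using hessM_comp_mulVec hf S x
  calc S * (J * hessM f x) = S * J * Sᵀ * hessM f (S *ᵥ x) * S := by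
        rw [hH]; simp only [Matrix.mul_assoc]
    _ = J * hessM f (S *ᵥ x) * S := by rw [hSJ]

end Hessian

attribute [local instance] Matrix.linftyOpNormedRing Matrix.linftyOpNormedAlgebra in
theorem matrixLinearODE_apply_add_of_semiconjBy {ι : Type*} [Fintype ι] [DecidableEq ι]
    {A Y : ℝ → Matrix ι ι ℝ} {S : Matrix ι ι ℝ} {τ : ℝ} (hA : Continuous A) (hS : IsUnit S)
    (hSA : ∀ t, SemiconjBy S (A t) (A (t + τ)))
    (hY : ∀ t i j, HasDerivAt (fun u => Y u i j) ((A t * Y t) i j) t) (hY₀ : IsUnit (Y 0))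
    (t : ℝ) :
    Y (t + τ) = S * Y t * (Y 0)⁻¹ * S⁻¹ * Y τ := by
  obtain ⟨S, rfl⟩ := hS
  obtain ⟨Y₀, hY₀⟩ := hY₀
  rw [← hY₀, ← coe_units_inv, ← coe_units_inv]
  exact linearODE_apply_add_of_semiconjBy hA hSA
    (fun t => hasDerivAt_pi.2 fun i => hasDerivAt_pi.2 (hY t i)) hY₀.symm t

/-- For antisymmetric `J`, the condition `hSJ` says that `S` is a Poisson map, and `hsym` that `γ`
is a relative periodic curve: it closes up after time `τ` only modulo `S`. -/
theorem roberts_time_preserving_general_general {ι : Type} [Fintype ι] [DecidableEq ι]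
    {Γ : (ι → ℝ) → ℝ} (hΓ : ContDiff ℝ 2 Γ) {γ : ℝ → ι → ℝ} (hγ : Continuous γ)
    {J S : Matrix ι ι ℝ} {τ : ℝ} (hsym : ∀ s, γ (s + τ) = S *ᵥ γ s)
    (hSinv : ∀ x, Γ (S *ᵥ x) = Γ x) (hSJ : S * J * Sᵀ = J) (hS : IsUnit S)
    {Y : ℝ → Matrix ι ι ℝ} (hY₀ : IsUnit (Y 0))
    (hY : ∀ s i j, HasDerivAt (fun u => Y u i j) ((J * hessM Γ (γ s) * Y s) i j) s) :
    (∀ s, Y (s + τ) = S * Y s * (Y 0)⁻¹ * S⁻¹ * Y τ) ∧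
    (∀ k : ℕ, Y (k * τ) = S ^ k * Y 0 * ((Y 0)⁻¹ * S⁻¹ * Y τ) ^ k) := by
  have hA : Continuous fun s => J * hessM Γ (γ s) :=
    continuous_const.matrix_mul ((continuous_hessM hΓ).comp hγ)
  have hSA (s : ℝ) : SemiconjBy S (J * hessM Γ (γ s)) (J * hessM Γ (γ (s + τ))) := by
    rw [hsym]; exact semiconjBy_mul_hessM hΓ hSinv hSJ (γ s)
  have hshift := matrixLinearODE_apply_add_of_semiconjBy hA hS hSA hY hY₀
  refine ⟨hshift, fun k => ?_⟩
  rw [← nsmul_eq_mul]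
  exact apply_nsmul_of_apply_add (fun s => by rw [hshift]; simp only [Matrix.mul_assoc]) k

/-- Roberts' remark for non-identity initial conditions (time-preserving case): if `Y` solves
the linearization along `γ` with `Y(0) = Y₀` invertible, then
`Y(s + T/N) = S Y(s) Y₀⁻¹ Sᵀ Y(T/N)` for all `s`, and consequently
`Y(kT/N) = Sᵏ Y₀ (Y₀⁻¹ Sᵀ Y(T/N))ᵏ` for every `k ∈ ℕ`. -/
theorem roberts_time_preserving_general (n N : ℕ) (hn : 1 ≤ n) (hN : 1 ≤ N) (T : ℝ) (hT : 0 < T)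
    (Γ : ((Fin n ⊕ Fin n) → ℝ) → ℝ) (hΓ : ContDiff ℝ 2 Γ)
    (γ : ℝ → (Fin n ⊕ Fin n) → ℝ)
    (hsol : ∀ s : ℝ, HasDerivAt γ ((stdJ n).mulVec (gradV Γ (γ s))) s)
    (hper : ∀ s : ℝ, γ (s + T) = γ s)
    (S : Matrix (Fin n ⊕ Fin n) (Fin n ⊕ Fin n) ℝ)
    (hsym : ∀ s : ℝ, γ (s + T / N) = S.mulVec (γ s))
    (hSinv : ∀ x, Γ (S.mulVec x) = Γ x)
    (hSJ : S * stdJ n = stdJ n * S)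
    (horth : Sᵀ * S = 1)
    (Y₀ : Matrix (Fin n ⊕ Fin n) (Fin n ⊕ Fin n) ℝ) (hY₀ : IsUnit Y₀)
    (Y : ℝ → Matrix (Fin n ⊕ Fin n) (Fin n ⊕ Fin n) ℝ)
    (hY0 : Y 0 = Y₀)
    (hY : ∀ (s : ℝ) (i j : Fin n ⊕ Fin n),
      HasDerivAt (fun u => Y u i j) ((stdJ n * hessM Γ (γ s) * Y s) i j) s) :
    (∀ s : ℝ, Y (s + T / N) = S * Y s * Y₀⁻¹ * Sᵀ * Y (T / N)) ∧
    (∀ k : ℕ, Y ((k : ℝ) * T / N) = S ^ k * Y₀ * (Y₀⁻¹ * Sᵀ * Y (T / N)) ^ k) := by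
  have hγ : Continuous γ := continuous_iff_continuousAt.2 fun s => (hsol s).continuousAt
  have hS : S * Sᵀ = 1 := mul_eq_one_comm.1 horth
  have hJ : S * stdJ n * Sᵀ = stdJ n := by rw [hSJ, Matrix.mul_assoc, hS, Matrix.mul_one]
  subst hY0
  simpa only [mul_div_assoc, inv_eq_left_inv horth] using
    roberts_time_preserving_general_general hΓ hγ hsym hSinv hJ (.of_mul_eq_one _ hS) hY₀ hY
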